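/- Let L, M be Lagrangian subspaces of V with L + M = V. Then the composition of the inclusion Z ↪ H with the quotient map H ↠ M\H/L (double cosets with respect to the subgroups M × {0} and L × {0}) is a bijection from Z onto M\H/L. Consequently, the space ℂ(M\H/L, ψ) of functions K : H → ℂ satisfying K((0,z)·(m,0)·h·(l,0)) = ψ(z)·K(h) for all z ∈ k, m ∈ M, l ∈ L, h ∈ H is one-dimensional, spanned by the pullback τ*ψ of ψ along the inverse bijection τ : M\H/L → Z. -/

import Mathlib

open scoped BigOperators
attribute [local instance] Classical.propDecidable

variable {k : Type} [Field k] [Fintype k]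
variable {V : Type} [AddCommGroup V] [Module k V] [Fintype V]

/-- Multiplication of the Heisenberg group `H = V × k`:
`(v,z)·(v',z') = (v + v', z + z' + (1/2) ω(v,v'))`. -/
def hMul (ω : V →ₗ[k] V →ₗ[k] k) (x y : V × k) : V × k :=
  (x.1 + y.1, x.2 + y.2 + (2 : k)⁻¹ * ω x.1 y.1)

/-- Inversion in the Heisenberg group. -/
def hInv (ω : V →ₗ[k] V →ₗ[k] k) (x : V × k) : V × k :=
  (-x.1, -x.2 + (2 : k)⁻¹ * ω x.1 x.1)

/-- Right translation `(π(h)f)(h') = f(h'·h)` of functions on the Heisenberg group. -/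
def rt (ω : V →ₗ[k] V →ₗ[k] k) (h : V × k) (f : V × k → ℂ) : V × k → ℂ :=
  fun x => f (hMul ω x h)

/-- The model `ℂ(L\H, ψ)`: functions `f : H → ℂ` with `f((0,z)·(l,0)·h) = ψ(z)·f(h)`
for `z ∈ k`, `l ∈ L`. -/
noncomputable def model (ω : V →ₗ[k] V →ₗ[k] k) (L : Submodule k V) (ψ : k → ℂ) :
    Submodule ℂ (V × k → ℂ) where
  carrier := {f | ∀ z : k, ∀ l ∈ L, ∀ h : V × k,
    f (hMul ω ((0 : V), z) (hMul ω (l, (0 : k)) h)) = ψ z * f h}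
  add_mem' := by
    intro f g hf hg z l hl h
    simp only [Pi.add_apply, hf z l hl h, hg z l hl h]; ring
  zero_mem' := by intro z l hl h; simp
  smul_mem' := by
    intro c f hf z l hl h
    simp only [Pi.smul_apply, smul_eq_mul, hf z l hl h]; ring

/-- The space `ℂ(M\H/L, ψ)`: functions `K : H → ℂ` with
`K((0,z)·(m,0)·h·(l,0)) = ψ(z)·K(h)` for `z ∈ k`, `m ∈ M`, `l ∈ L`. -/
noncomputable def biModel (ω : V →ₗ[k] V →ₗ[k] k) (M L : Submodule k V) (ψ : k → ℂ) :
    Submodule ℂ (V × k → ℂ) where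
  carrier := {f | ∀ z : k, ∀ m ∈ M, ∀ l ∈ L, ∀ h : V × k,
    f (hMul ω (hMul ω (hMul ω ((0 : V), z) (m, (0 : k))) h) (l, (0 : k))) = ψ z * f h}
  add_mem' := by
    intro f g hf hg z m hm l hl h
    simp only [Pi.add_apply, hf z m hm l hl h, hg z m hm l hl h]; ring
  zero_mem' := by intro z m hm l hl h; simp
  smul_mem' := by
    intro c f hf z m hm l hl h
    simp only [Pi.smul_apply, smul_eq_mul, hf z m hm l hl h]; ring

/-- The averaging operator `F_{M,L}[f](h) = ∑_{m ∈ M} f((m,0)·h)`. -/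
noncomputable def avg (ω : V →ₗ[k] V →ₗ[k] k) (M : Submodule k V) :
    (V × k → ℂ) →ₗ[ℂ] (V × k → ℂ) where
  toFun f := fun h => ∑ m : M, f (hMul ω ((m : V), (0 : k)) h)
  map_add' f g := by funext h; simp [Finset.sum_add_distrib]
  map_smul' c f := by funext h; simp [Finset.mul_sum]

/-- Normalized convolution on the Heisenberg group:
`(K ∗ f)(h) = q^{-(n+1)} ∑_{h' ∈ H} K(h')·f(h'⁻¹·h)`. -/
noncomputable def conv (ω : V →ₗ[k] V →ₗ[k] k) (n : ℕ) (K f : V × k → ℂ) : V × k → ℂ :=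
  fun h => ((Fintype.card k : ℂ))⁻¹ ^ (n + 1) * ∑ x : V × k, K x * f (hMul ω (hInv ω x) h)

/-- The one-dimensional Gauss sum `G(ψ) = ∑_{z ∈ k} ψ(z²/2)`. -/
noncomputable def gaussSum' (ψ : k → ℂ) : ℂ := ∑ z : k, ψ ((2 : k)⁻¹ * z ^ 2)

/-- The normalization coefficient `A_{M°,L°} = (G(ψ)/q)ⁿ · σ((−1)^{n(n−1)/2} ω_∧(o_L,o_M))`,
with the orientations presented by bases and `ω_∧(o_L,o_M) = det (ω(bL i, bM j))_{ij}`,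
and `σ` the Legendre (quadratic) character. -/
noncomputable def Acoef (ω : V →ₗ[k] V →ₗ[k] k) (ψ : k → ℂ) (n : ℕ)
    {M L : Submodule k V} (bM : Module.Basis (Fin n) k M) (bL : Module.Basis (Fin n) k L) : ℂ :=
  (gaussSum' ψ / (Fintype.card k : ℂ)) ^ n *
    ((quadraticChar k ((-1 : k) ^ (n * (n - 1) / 2) *
      (Matrix.of fun i j => ω ((bL i : V)) ((bM j : V))).det) : ℤ) : ℂ)

/-- The symplectic group `Sp(V)` of linear automorphisms of `V` preserving `ω`. -/
def Sp (ω : V →ₗ[k] V →ₗ[k] k) : Subgroup (V ≃ₗ[k] V) where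
  carrier := {g | ∀ u v : V, ω (g u) (g v) = ω u v}
  one_mem' := by intro u v; rfl
  mul_mem' := by
    intro a b ha hb u v
    have h : ∀ x : V, (a * b) x = a (b x) := fun x => rfl
    rw [h, h, ha, hb]
  inv_mem' := by
    intro a ha u v
    have h1 : a (a⁻¹ u) = u := a.apply_symm_apply u
    have h2 : a (a⁻¹ v) = v := a.apply_symm_apply v
    have := ha (a⁻¹ u) (a⁻¹ v)
    rw [h1, h2] at this
    exact this.symm

/-- A nontrivial (nowhere-vanishing) additive character `ψ : k → ℂ*`. -/
def IsAddChar (ψ : k → ℂ) : Prop :=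
  (∀ a b : k, ψ (a + b) = ψ a * ψ b) ∧ (∀ a : k, ψ a ≠ 0) ∧ (∃ a : k, ψ a ≠ 1)

/-- `π` is a Heisenberg representation on `ℋ` with central character `ψ`:
a representation of `H = V × k` by linear maps, with the center acting by `ψ`,
which is irreducible. -/
def IsHeisenbergRep (ω : V →ₗ[k] V →ₗ[k] k) (ψ : k → ℂ)
    {ℋ : Type} [AddCommGroup ℋ] [Module ℂ ℋ] (π : V × k → (ℋ →ₗ[ℂ] ℋ)) : Prop :=
  π ((0 : V), (0 : k)) = LinearMap.id ∧
  (∀ x y : V × k, π (hMul ω x y) = (π x).comp (π y)) ∧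
  (∀ z : k, π ((0 : V), z) = ψ z • LinearMap.id) ∧
  (∀ W : Submodule ℂ ℋ, (∀ x : V × k, ∀ w ∈ W, π x w ∈ W) → W = ⊥ ∨ W = ⊤)

/-- The action `g_*` of a symplectic automorphism on functions on `H`, `(g_* f)(h) = f(g⁻¹·h)`. -/
def gstar (g : V ≃ₗ[k] V) (f : V × k → ℂ) : V × k → ℂ :=
  fun x => f (g.symm x.1, x.2)

/-! Write `v = m + l` along `V = M ⊕ L`. Multiplying out,
`(m,0)·(0,z)·(l,0) = (m + l, z + ½ω(m,l))`, so every `(v,t)` lies in exactly one double coset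
`M·(0,z)·L`, the one with `z = τ(v,t) := t - ½ω(m,l)`. Since `M` and `L` are isotropic,
`τ((0,z)·(m,0)·h·(l,0)) = z + τ(h)`, hence `ψ ∘ τ` belongs to `ℂ(M\H/L, ψ)`; and a function in
that space is determined by its value at the identity.

That `M` and `L` are complementary comes from nondegeneracy: a vector of `M ∩ L` is orthogonal to
`M + L = V`. -/

section TransversalIsotropic

variable {R E : Type*} [CommRing R] [AddCommGroup E] [Module R E]

theorem isCompl_of_isotropic_of_sup_eq_top {ω : E →ₗ[R] E →ₗ[R] R} (hω : ω.SeparatingLeft)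
    {M L : Submodule R E} (hM : ∀ x ∈ M, ∀ y ∈ M, ω x y = 0) (hL : ∀ x ∈ L, ∀ y ∈ L, ω x y = 0)
    (hsup : M ⊔ L = ⊤) : IsCompl M L := by
  refine ⟨Submodule.disjoint_def.2 fun x hxM hxL => hω x fun y => ?_, codisjoint_iff.2 hsup⟩
  obtain ⟨m, hm, l, hl, rfl⟩ := Submodule.mem_sup.1 (hsup ▸ Submodule.mem_top : y ∈ M ⊔ L)
  rw [map_add, hM x hxM m hm, hL x hxL l hl, add_zero]

end TransversalIsotropic

section Heisenberg

variable {F E : Type} [Field F] [AddCommGroup E] [Module F E] (ω : E →ₗ[F] E →ₗ[F] F)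
  {M L : Submodule F E}

theorem hMul_hMul_center (m l : E) (z : F) :
    hMul ω (hMul ω (m, 0) (0, z)) (l, 0) = (m + l, z + 2⁻¹ * ω m l) := by
  simp [hMul]

/-- The retraction `τ : H → Z ≃ F` sending `h` to the central coordinate of its double coset
`M·h·L`. It is a function on all of `H`, given by an explicit formula, rather than on the
quotient `M\H/L`. -/
noncomputable def centralCoord (hML : IsCompl M L) (h : E × F) : F :=
  h.2 - 2⁻¹ * ω (M.projection L hML h.1) (L.projection M hML.symm h.1)

theorem centralCoord_add (hML : IsCompl M L) {m l : E} (hm : m ∈ M) (hl : l ∈ L) (t : F) :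
    centralCoord ω hML (m + l, t) = t - 2⁻¹ * ω m l := by
  have hMm : M.projection L hML (m + l) = m := by
    rw [map_add, Submodule.projection_apply_of_mem_left hML hm,
      (Submodule.projection_apply_eq_zero_iff hML).2 hl, add_zero]
  have hLl : L.projection M hML.symm (m + l) = l := by
    rw [map_add, Submodule.projection_apply_of_mem_left hML.symm hl,
      (Submodule.projection_apply_eq_zero_iff hML.symm).2 hm, zero_add]
  rw [centralCoord, hMm, hLl]

theorem centralCoord_hMul_hMul_center (hML : IsCompl M L) {m l : E} (hm : m ∈ M) (hl : l ∈ L)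
    (z : F) :
    centralCoord ω hML (hMul ω (hMul ω (m, 0) (0, z)) (l, 0)) = z := by
  rw [hMul_hMul_center, centralCoord_add ω hML hm hl, add_sub_cancel_right]

theorem existsUnique_eq_hMul_hMul_center (hML : IsCompl M L) (h : E × F) :
    ∃! z : F, ∃ m ∈ M, ∃ l ∈ L, h = hMul ω (hMul ω (m, 0) (0, z)) (l, 0) := by
  refine ⟨centralCoord ω hML h, ⟨_, Submodule.projection_apply_mem hML h.1, _,
    Submodule.projection_apply_mem hML.symm h.1, ?_⟩, ?_⟩
  · rw [hMul_hMul_center, Submodule.projection_add_projection_eq_self, centralCoord,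
      sub_add_cancel]
  · rintro z ⟨m, hm, l, hl, rfl⟩
    exact (centralCoord_hMul_hMul_center ω hML hm hl z).symm

theorem center_hMul_hMul_hMul_center_hMul (hM : ∀ x ∈ M, ∀ y ∈ M, ω x y = 0)
    (hL : ∀ x ∈ L, ∀ y ∈ L, ω x y = 0) {m m' l l' : E} (hm : m ∈ M) (hm' : m' ∈ M)
    (hl : l ∈ L) (hl' : l' ∈ L) (z t : F) :
    hMul ω (hMul ω (hMul ω (0, z) (m, 0)) (hMul ω (hMul ω (m', 0) (0, t)) (l', 0))) (l, 0) =
      hMul ω (hMul ω (m + m', 0) (0, z + t)) (l' + l, 0) := by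
  rw [hMul_hMul_center, hMul_hMul_center]
  ext
  · simp only [hMul, zero_add, add_assoc]
  · simp only [hMul, map_zero, map_add, LinearMap.zero_apply, LinearMap.add_apply, zero_add,
      hM m hm m' hm', hL l' hl' l hl]
    ring

theorem centralCoord_center_hMul_hMul_hMul (hML : IsCompl M L)
    (hM : ∀ x ∈ M, ∀ y ∈ M, ω x y = 0) (hL : ∀ x ∈ L, ∀ y ∈ L, ω x y = 0)
    (z : F) {m l : E} (hm : m ∈ M) (hl : l ∈ L) (h : E × F) :
    centralCoord ω hML (hMul ω (hMul ω (hMul ω (0, z) (m, 0)) h) (l, 0)) =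
      z + centralCoord ω hML h := by
  obtain ⟨t, m', hm', l', hl', rfl⟩ := (existsUnique_eq_hMul_hMul_center ω hML h).exists
  rw [center_hMul_hMul_hMul_center_hMul ω hM hL hm hm' hl hl',
    centralCoord_hMul_hMul_center ω hML (M.add_mem hm hm') (L.add_mem hl' hl),
    centralCoord_hMul_hMul_center ω hML hm' hl']

theorem apply_eq_of_mem_biModel (hML : IsCompl M L) {ψ : F → ℂ} {K : E × F → ℂ}
    (hK : K ∈ biModel ω M L ψ) (h : E × F) : K h = ψ (centralCoord ω hML h) * K (0, 0) := by
  obtain ⟨z, m, hm, l, hl, rfl⟩ := (existsUnique_eq_hMul_hMul_center ω hML h).exists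
  rw [centralCoord_hMul_hMul_center ω hML hm hl, ← hK z m hm l hl]
  simp [hMul]

theorem comp_centralCoord_mem_biModel (hML : IsCompl M L) (hM : ∀ x ∈ M, ∀ y ∈ M, ω x y = 0)
    (hL : ∀ x ∈ L, ∀ y ∈ L, ω x y = 0) (ψ : AddChar F ℂ) :
    ψ ∘ centralCoord ω hML ∈ biModel ω M L ψ := by
  intro z m hm l hl h
  rw [Function.comp_apply, Function.comp_apply,
    centralCoord_center_hMul_hMul_hMul ω hML hM hL z hm hl, AddChar.map_add_eq_mul]

theorem biModel_eq_span (hML : IsCompl M L) (hM : ∀ x ∈ M, ∀ y ∈ M, ω x y = 0)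
    (hL : ∀ x ∈ L, ∀ y ∈ L, ω x y = 0) (ψ : AddChar F ℂ) :
    biModel ω M L ψ = Submodule.span ℂ {ψ ∘ centralCoord ω hML} := by
  refine le_antisymm (fun K hK => Submodule.mem_span_singleton.2 ⟨K (0, 0), funext fun h => ?_⟩)
    ((Submodule.span_singleton_le_iff_mem _ _).2 (comp_centralCoord_mem_biModel ω hML hM hL ψ))
  rw [Pi.smul_apply, smul_eq_mul, Function.comp_apply, apply_eq_of_mem_biModel ω hML hK h,
    mul_comm]

/-- A nowhere-vanishing additive character in the sense of `IsAddChar`, as a Mathlib `AddChar`. -/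
def IsAddChar.toAddChar {ψ : F → ℂ} (hψ : IsAddChar ψ) : AddChar F ℂ where
  toFun := ψ
  map_zero_eq_one' := by
    have h : ψ 0 * ψ 0 = ψ 0 := by rw [← hψ.1, add_zero]
    exact (mul_eq_left₀ (hψ.2.1 0)).1 h
  map_add_eq_mul' := hψ.1

theorem double_coset_space_general (hchar : ringChar F ≠ 2) (hML : IsCompl M L)
    (hM : ∀ x ∈ M, ∀ y ∈ M, ω x y = 0) (hL : ∀ x ∈ L, ∀ y ∈ L, ω x y = 0) (ψ : AddChar F ℂ) :
    (∀ h : E × F, ∃! z : F, ∃ m ∈ M, ∃ l ∈ L, h = hMul ω (hMul ω (m, 0) (0, z)) (l, 0)) ∧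
    (∃ K₀ : E × F → ℂ, K₀ ∈ biModel ω M L ψ ∧
        (∀ z : F, ∀ m ∈ M, ∀ l ∈ L, K₀ (hMul ω (hMul ω (m, 0) (0, z)) (l, 0)) = ψ z) ∧
        biModel ω M L ψ = Submodule.span ℂ {K₀} ∧
        Module.finrank ℂ (biModel ω M L ψ) = 1) := by
  have hspan := biModel_eq_span ω hML hM hL ψ
  refine ⟨existsUnique_eq_hMul_hMul_center ω hML, ψ ∘ centralCoord ω hML,
    comp_centralCoord_mem_biModel ω hML hM hL ψ, fun z m hm l hl => ?_, hspan, ?_⟩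
  · rw [Function.comp_apply, centralCoord_hMul_hMul_center ω hML hm hl]
  · rw [hspan]
    exact finrank_span_singleton fun h => (ψ.val_isUnit _).ne_zero (congrFun h 0)

end Heisenberg

/-- for transversal Lagrangians `L, M`, the composition `Z ↪ H ↠ M\\H/L` is a
bijection; consequently `ℂ(M\\H/L, ψ)` is one-dimensional, spanned by the pullback `τ*ψ`. -/
theorem double_coset_space
    (ω : V →ₗ[k] V →ₗ[k] k) (n : ℕ)
    (hchar : ringChar k ≠ 2)
    (hdim : Module.finrank k V = 2 * n)
    (halt : ∀ v : V, ω v v = 0)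
    (hnd : ∀ v : V, (∀ u : V, ω v u = 0) → v = 0)
    (ψ : k → ℂ) (hψ : IsAddChar ψ)
    (M L : Submodule k V)
    (hMiso : ∀ x ∈ M, ∀ y ∈ M, ω x y = 0) (hMrank : Module.finrank k M = n)
    (hLiso : ∀ x ∈ L, ∀ y ∈ L, ω x y = 0) (hLrank : Module.finrank k L = n)
    (hgen : L ⊔ M = ⊤) :
    (∀ h : V × k, ∃! z : k, ∃ m ∈ M, ∃ l ∈ L,
        h = hMul ω (hMul ω (m, (0 : k)) ((0 : V), z)) (l, (0 : k))) ∧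
    (∃ K₀ : V × k → ℂ, K₀ ∈ biModel ω M L ψ ∧
        (∀ z : k, ∀ m ∈ M, ∀ l ∈ L,
          K₀ (hMul ω (hMul ω (m, (0 : k)) ((0 : V), z)) (l, (0 : k))) = ψ z) ∧
        biModel ω M L ψ = Submodule.span ℂ {K₀} ∧
        Module.finrank ℂ ↥(biModel ω M L ψ) = 1) :=
  double_coset_space_general ω hchar
    (isCompl_of_isotropic_of_sup_eq_top hnd hMiso hLiso (sup_comm L M ▸ hgen)) hMiso hLiso
    hψ.toAddChar
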